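/- arXiv:1408.0976 — 2 statements merged into one kernel-verified Lean document; each statement's English description precedes it below -/
import Mathlib

section
/- For any doubly stochastic n×n matrix A = (a_ij), the permanent of A is at least ∏_{i,j} (1-a_ij)^{1-a_ij}. -/
open scoped BigOperators

noncomputable def perm {n : ℕ} (A : Matrix (Fin n) (Fin n) ℝ) : ℝ :=
  ∑ σ : Equiv.Perm (Fin n), ∏ i, A i (σ i)

/-- Monomer-dimer partition function of the bipartite multigraph with edge list `L`. -/
noncomputable def mdZ {I J : Type} [DecidableEq I] [DecidableEq J] (w : I → J → ℝ)
    (r : I → ℝ) (c : J → ℝ) : List (I × J) → Finset I → Finset J → ℝ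
  | [], S, T => (∏ i ∈ S, r i) * ∏ j ∈ T, c j
  | e :: L, S, T => mdZ w r c L S T +
      if e.1 ∈ S ∧ e.2 ∈ T then w e.1 e.2 * mdZ w r c L (S.erase e.1) (T.erase e.2) else 0

section md
variable {I J : Type} [DecidableEq I] [DecidableEq J]

lemma mdZ_nonneg (w : I → J → ℝ) (r : I → ℝ) (c : J → ℝ) (hw : ∀ i j, 0 ≤ w i j)
    (hr : ∀ i, 0 ≤ r i) (hc : ∀ j, 0 ≤ c j) (L : List (I × J)) :
    ∀ S T, 0 ≤ mdZ w r c L S T := by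
  induction L with
  | nil =>
    intro S T
    exact mul_nonneg (Finset.prod_nonneg fun i _ => hr i) (Finset.prod_nonneg fun i _ => hc i)
  | cons e L ih =>
    intro S T
    simp only [mdZ]
    have h1 := ih S T
    have h2 := mul_nonneg (hw e.1 e.2) (ih (S.erase e.1) (T.erase e.2))
    split_ifs <;> linarith

lemma mdZ_swap (w : I → J → ℝ) (r : I → ℝ) (c : J → ℝ) (L : List (I × J)) :
    ∀ S T, mdZ (fun j i => w i j) c r (L.map Prod.swap) T S = mdZ w r c L S T := by
  induction L with
  | nil => intro S T; simp [mdZ, mul_comm]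
  | cons e L ih =>
    intro S T
    simp only [List.map_cons, mdZ, Prod.fst_swap, Prod.snd_swap, ih, and_comm]

lemma mdZ_row (w : I → J → ℝ) (r : I → ℝ) (c : J → ℝ) (i : I) (L : List (I × J)) :
    ∀ S T, i ∈ S → mdZ w r c L S T = r i * mdZ w r c L (S.erase i) T +
      ∑ k ∈ T, (L.count (i, k) : ℝ) * w i k * mdZ w r c L (S.erase i) (T.erase k) := by
  induction L with
  | nil =>
    intro S T hi
    simp [mdZ, ← Finset.mul_prod_erase S r hi, mul_assoc]
  | cons e L ih =>
    intro S T hi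
    obtain ⟨a, b⟩ := e
    simp only [mdZ]
    by_cases ha : a = i
    · subst ha
      have hc : ∀ k, (((a, b) :: L).count (a, k) : ℝ) = L.count (a, k) + if k = b then 1 else 0 := by
        intro k
        rw [List.count_cons]
        by_cases h : k = b
        · simp [h]
        · have : b ≠ k := fun h' => h h'.symm
          simp [h, this]
      simp only [hc, ih S T hi, Finset.notMem_erase, false_and, if_false, add_zero, hi, true_and]
      simp only [add_mul, Finset.sum_add_distrib, ite_mul, one_mul, zero_mul, Finset.sum_ite_eq']
      ring
    · have hc : ∀ k, (((a, b) :: L).count (i, k) : ℝ) = L.count (i, k) := by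
        intro k
        rw [List.count_cons]
        simp [ha]
      simp only [hc, ih S T hi, Finset.mem_erase, ne_eq, ha, not_false_eq_true, true_and]
      by_cases hab : a ∈ S ∧ b ∈ T
      · obtain ⟨haS, hbT⟩ := hab
        have hi' : i ∈ S.erase a := Finset.mem_erase.2 ⟨fun h => ha h.symm, hi⟩
        simp only [haS, hbT, and_self, if_true, ih _ (T.erase b) hi', and_true, true_and]
        rw [Finset.erase_right_comm (a := a) (b := i)]
        have : ∑ k ∈ T, (L.count (i, k) : ℝ) * w i k * (mdZ w r c L (S.erase i) (T.erase k) +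
            if ¬ b = k then w a b * mdZ w r c L ((S.erase i).erase a) ((T.erase k).erase b) else 0)
            = ∑ k ∈ T, (L.count (i, k) : ℝ) * w i k * mdZ w r c L (S.erase i) (T.erase k)
            + ∑ k ∈ T.erase b, (L.count (i, k) : ℝ) * w i k *
              (w a b * mdZ w r c L ((S.erase i).erase a) ((T.erase b).erase k)) := by
          simp only [mul_add, Finset.sum_add_distrib]
          congr 1
          rw [← Finset.add_sum_erase T _ hbT]
          simp only [not_true_eq_false, if_false, mul_zero, zero_add]
          apply Finset.sum_congr rfl
          intro k hk
          have : ¬ b = k := fun h => (Finset.mem_erase.1 hk).1 h.symm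
          rw [if_pos this, Finset.erase_right_comm (a := k) (b := b)]
        rw [this, mul_add, mul_add, Finset.mul_sum]
        have h2 : ∀ x, w a b * ((L.count (i, x) : ℝ) * w i x *
            mdZ w r c L ((S.erase i).erase a) ((T.erase b).erase x)) = (L.count (i, x) : ℝ) * w i x *
              (w a b * mdZ w r c L ((S.erase i).erase a) ((T.erase b).erase x)) := by
          intro x; ring
        simp only [h2]
        ring
      · have h2 : ∀ k, ¬ (a ∈ S ∧ ¬ b = k ∧ b ∈ T) := fun k h => hab ⟨h.1, h.2.2⟩
        simp only [hab, h2, if_false, add_zero]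

lemma mdZ_col (w : I → J → ℝ) (r : I → ℝ) (c : J → ℝ) (j : J) (L : List (I × J)) (S : Finset I)
    (T : Finset J) (hj : j ∈ T) : mdZ w r c L S T = c j * mdZ w r c L S (T.erase j) +
      ∑ k ∈ S, (L.count (k, j) : ℝ) * w k j * mdZ w r c L (S.erase k) (T.erase j) := by
  have h := mdZ_row (fun j i => w i j) c r j (L.map Prod.swap) T S hj
  simp only [mdZ_swap] at h
  rw [h]
  congr 1
  apply Finset.sum_congr rfl
  intro k _
  have : (L.map Prod.swap).count (j, k) = L.count (k, j) :=
    List.count_map_of_injective L Prod.swap Prod.swap_injective (k, j)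
  rw [this]

lemma mdZ_corr (w : I → J → ℝ) (r : I → ℝ) (c : J → ℝ) (hw : ∀ i j, 0 ≤ w i j)
    (hr : ∀ i, 0 ≤ r i) (hc : ∀ j, 0 ≤ c j) (L : List (I × J)) (m : ℕ) :
    ∀ S T i j, T.card ≤ m → i ∈ S → j ∈ T →
      mdZ w r c L (S.erase i) T * mdZ w r c L S (T.erase j) ≤
        mdZ w r c L S T * mdZ w r c L (S.erase i) (T.erase j) := by
  induction m with
  | zero =>
    intro S T i j hT hi hj
    have : T = ∅ := Finset.card_eq_zero.1 (by omega)
    simp [this] at hj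
  | succ m ih =>
    intro S T i j hT hi hj
    have same : ∀ k ∈ T.erase j, mdZ w r c L (S.erase i) T *
          mdZ w r c L (S.erase i) ((T.erase j).erase k) ≤
        mdZ w r c L (S.erase i) (T.erase j) * mdZ w r c L (S.erase i) (T.erase k) := by
      intro k hk
      have hjk : j ∈ T.erase k := by
        rw [Finset.mem_erase] at hk ⊢
        exact ⟨fun h => hk.1 h.symm, hj⟩
      rw [mdZ_col w r c j L _ T hj, mdZ_col w r c j L _ (T.erase k) hjk,
        Finset.erase_right_comm (a := k) (b := j)]
      have key : ∑ l ∈ S.erase i, (L.count (l, j) : ℝ) * w l j *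
            mdZ w r c L ((S.erase i).erase l) (T.erase j) *
              mdZ w r c L (S.erase i) ((T.erase j).erase k) ≤
          ∑ l ∈ S.erase i, (L.count (l, j) : ℝ) * w l j *
            mdZ w r c L ((S.erase i).erase l) ((T.erase j).erase k) *
              mdZ w r c L (S.erase i) (T.erase j) := by
        apply Finset.sum_le_sum
        intro l hl
        have hcard : (T.erase j).card ≤ m := by
          rw [Finset.card_erase_of_mem hj]; omega
        have h := ih (S.erase i) (T.erase j) l k hcard hl hk
        have h0 : 0 ≤ (L.count (l, j) : ℝ) * w l j := mul_nonneg (Nat.cast_nonneg _) (hw _ _)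
        have := mul_le_mul_of_nonneg_left h h0
        linarith
      rw [← Finset.sum_mul, ← Finset.sum_mul] at key
      linarith
    rw [mdZ_row w r c i L S T hi, mdZ_row w r c i L S (T.erase j) hi,
      ← Finset.add_sum_erase T _ hj]
    have key : ∑ k ∈ T.erase j, (L.count (i, k) : ℝ) * w i k *
          mdZ w r c L (S.erase i) ((T.erase j).erase k) * mdZ w r c L (S.erase i) T ≤
        ∑ k ∈ T.erase j, (L.count (i, k) : ℝ) * w i k *
          mdZ w r c L (S.erase i) (T.erase k) * mdZ w r c L (S.erase i) (T.erase j) := by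
      apply Finset.sum_le_sum
      intro k hk
      have h0 : 0 ≤ (L.count (i, k) : ℝ) * w i k := mul_nonneg (Nat.cast_nonneg _) (hw _ _)
      have := mul_le_mul_of_nonneg_left (same k hk) h0
      linarith
    rw [← Finset.sum_mul, ← Finset.sum_mul] at key
    have h1 : 0 ≤ (L.count (i, j) : ℝ) * w i j * mdZ w r c L (S.erase i) (T.erase j) *
        mdZ w r c L (S.erase i) (T.erase j) := by
      have h0 : 0 ≤ (L.count (i, j) : ℝ) * w i j := mul_nonneg (Nat.cast_nonneg _) (hw _ _)
      have := mdZ_nonneg w r c hw hr hc L (S.erase i) (T.erase j)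
      positivity
    linarith

lemma mdZ_congr (w : I → J → ℝ) (r r' : I → ℝ) (c c' : J → ℝ) (L : List (I × J)) :
    ∀ S T, (∀ i ∈ S, r i = r' i) → (∀ j ∈ T, c j = c' j) →
      mdZ w r c L S T = mdZ w r' c' L S T := by
  induction L with
  | nil =>
    intro S T hS hT
    simp only [mdZ]
    rw [Finset.prod_congr rfl hS, Finset.prod_congr rfl hT]
  | cons e L ih =>
    intro S T hS hT
    simp only [mdZ]
    rw [ih S T hS hT, ih (S.erase e.1) (T.erase e.2) (fun i hi => hS i (Finset.mem_of_mem_erase hi))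
      (fun i hi => hT i (Finset.mem_of_mem_erase hi))]

lemma mdZ_shift_row (w : I → J → ℝ) (r : I → ℝ) (c : J → ℝ) (L : List (I × J)) (S : Finset I)
    (T : Finset J) (i : I) (s : ℝ) (hi : i ∈ S) :
    mdZ w (fun k => r k + if k = i then s else 0) c L S T =
      mdZ w r c L S T + s * mdZ w r c L (S.erase i) T := by
  have h : ∀ T, mdZ w (fun k => r k + if k = i then s else 0) c L (S.erase i) T =
      mdZ w r c L (S.erase i) T := by
    intro T
    apply mdZ_congr
    · intro k hk
      simp [(Finset.mem_erase.1 hk).1]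
    · intros; rfl
  rw [mdZ_row _ _ _ i L S T hi, mdZ_row w r c i L S T hi]
  simp only [h, if_true]
  ring

lemma mdZ_shift_col (w : I → J → ℝ) (r : I → ℝ) (c : J → ℝ) (L : List (I × J)) (S : Finset I)
    (T : Finset J) (j : J) (s : ℝ) (hj : j ∈ T) :
    mdZ w r (fun k => c k + if k = j then s else 0) L S T =
      mdZ w r c L S T + s * mdZ w r c L S (T.erase j) := by
  have h := mdZ_shift_row (fun j i => w i j) c r (L.map Prod.swap) T S j s hj
  simpa only [mdZ_swap] using h

end md

lemma mdZ_perm {n : ℕ} (w : Fin n → Fin n → ℝ) (L : List (Fin n × Fin n))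
    (hL : ∀ e, L.count e = 1) (S : Finset (Fin n)) : ∀ τ : Equiv.Perm (Fin n),
    mdZ w (fun _ => 0) (fun _ => 0) L S (S.image τ) =
      ∑ σ : Equiv.Perm (Fin n), if (∀ i, i ∉ S → σ i = τ i) then ∏ i ∈ S, w i (σ i) else 0 := by
  induction S using Finset.induction_on with
  | empty =>
    intro τ
    have h1 : ∀ L : List (Fin n × Fin n), mdZ w (fun _ => 0) (fun _ => 0) L ∅ ∅ = 1 := by
      intro L
      induction L with
      | nil => simp [mdZ]
      | cons e L ih => simp [mdZ, ih]
    simp only [Finset.image_empty, h1, Finset.notMem_empty, not_false_eq_true, forall_const,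
      Finset.prod_empty]
    have h2 : ∀ σ : Equiv.Perm (Fin n), (∀ i, σ i = τ i) ↔ σ = τ :=
      fun σ => ⟨fun h => Equiv.ext h, fun h => by simp [h]⟩
    simp [h2]
  | insert i S hi ih =>
    intro τ
    rw [mdZ_row w _ _ i L _ _ (Finset.mem_insert_self i S)]
    simp only [hL, zero_mul, zero_add, Nat.cast_one, one_mul, Finset.erase_insert hi]
    have h1 : ∀ k ∈ (insert i S).image τ, w i k * mdZ w (fun _ => 0) (fun _ => 0) L S
        (((insert i S).image τ).erase k) = ∑ σ : Equiv.Perm (Fin n),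
          if k = σ i then (if (∀ l, l ∉ insert i S → σ l = τ l) then
            ∏ l ∈ insert i S, w l (σ l) else 0) else 0 := by
      intro k hk
      obtain ⟨m, hm, rfl⟩ := Finset.mem_image.1 hk
      let ρ : Equiv.Perm (Fin n) := (Equiv.swap i m).trans τ
      have hρi : ρ i = τ m := by simp [ρ]
      have hρ : ∀ l, l ∉ insert i S → ρ l = τ l := by
        intro l hl
        have h1 : l ≠ i := fun h => hl (h ▸ Finset.mem_insert_self i S)
        have h2 : l ≠ m := fun h => hl (h ▸ hm)
        simp [ρ, Equiv.swap_apply_of_ne_of_ne h1 h2]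
      have him : (insert i S).image ρ = (insert i S).image τ := by
        apply Finset.eq_of_subset_of_card_le
        · intro x hx
          obtain ⟨l, hl, rfl⟩ := Finset.mem_image.1 hx
          apply Finset.mem_image.2
          refine ⟨Equiv.swap i m l, ?_, by simp [ρ]⟩
          rw [Equiv.swap_apply_def]
          split_ifs
          · exact hm
          · exact Finset.mem_insert_self i S
          · exact hl
        · rw [Finset.card_image_of_injective _ τ.injective,
            Finset.card_image_of_injective _ ρ.injective]
      have himS : ((insert i S).image τ).erase (τ m) = S.image ρ := by
        rw [← him, ← hρi, Finset.image_insert, Finset.erase_insert]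
        intro h
        obtain ⟨l, hl, h⟩ := Finset.mem_image.1 h
        exact hi (ρ.injective h ▸ hl)
      rw [himS, ih ρ, Finset.mul_sum]
      apply Finset.sum_congr rfl
      intro σ _
      have hiff : (∀ l, l ∉ S → σ l = ρ l) ↔ (τ m = σ i ∧ ∀ l, l ∉ insert i S → σ l = τ l) := by
        constructor
        · intro h
          refine ⟨by rw [h i hi, hρi], fun l hl => ?_⟩
          rw [h l (fun h' => hl (Finset.mem_insert_of_mem h')), hρ l hl]
        · rintro ⟨h1, h2⟩ l hl
          by_cases hli : l = i
          · rw [hli, hρi, h1]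
          · have : l ∉ insert i S := by simp [hli, hl]
            rw [h2 l this, hρ l this]
      rw [← ite_and]
      by_cases hc : ∀ l, l ∉ S → σ l = ρ l
      · rw [if_pos hc, if_pos (hiff.1 hc), Finset.prod_insert hi, (hiff.1 hc).1]
      · rw [if_neg hc, if_neg (fun h => hc (hiff.2 h)), mul_zero]
    rw [Finset.sum_congr rfl h1, Finset.sum_comm]
    apply Finset.sum_congr rfl
    intro σ _
    rw [Finset.sum_ite_eq']
    by_cases hc : ∀ l, l ∉ insert i S → σ l = τ l
    · have : σ i ∈ (insert i S).image τ := by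
        by_contra hcon
        have h3 : τ.symm (σ i) ∉ insert i S := fun h => hcon (Finset.mem_image.2 ⟨_, h, by simp⟩)
        have h4 := hc _ h3
        rw [Equiv.apply_symm_apply] at h4
        have := σ.injective h4
        rw [this] at h3
        exact h3 (Finset.mem_insert_self i S)
      rw [if_pos this]
    · rw [if_neg hc, ite_self]

lemma bethe_pos {a B C D K α : ℝ} (h0 : 0 < α) (h1 : α < 1) (ha : 0 < a) (hB : 0 < B) (hC : 0 < C)
    (hD : 0 < D) (hBC : B * C = a * D)
    (h : ∀ s t : ℝ, 0 < s → 0 < t →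
      K * (s * t) ^ α ≤ a + α * B * s + α * C * t + α ^ 2 * D * (s * t)) :
    K * (1 - α) ^ (1 - α) ≤ a + α * D := by
  have hβ : 0 < 1 - α := by linarith
  have h2 := h (a / (B * (1 - α))) (a / (C * (1 - α))) (by positivity) (by positivity)
  have e1 : a / (B * (1 - α)) * (a / (C * (1 - α))) = a / (D * (1 - α) ^ 2) := by
    have : a / (B * (1 - α)) * (a / (C * (1 - α))) = a ^ 2 / ((B * C) * (1 - α) ^ 2) := by
      field_simp
    rw [this, hBC]
    field_simp
  rw [e1] at h2
  have e2 : a + α * B * (a / (B * (1 - α))) + α * C * (a / (C * (1 - α))) +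
      α ^ 2 * D * (a / (D * (1 - α) ^ 2)) = a / (1 - α) ^ 2 := by
    field_simp
    ring
  rw [e2] at h2
  have h3 := Real.geom_mean_le_arith_mean2_weighted hβ.le h0.le
    (div_pos ha hβ).le hD.le (by ring)
  have e3 : (1 - α) * (a / (1 - α)) = a := by field_simp
  rw [e3] at h3
  refine le_trans ?_ h3
  have hx : 0 < (a / (D * (1 - α) ^ 2)) ^ α := by positivity
  have h4 : K ≤ a / (1 - α) ^ 2 / (a / (D * (1 - α) ^ 2)) ^ α := by
    rw [le_div_iff₀ hx]; exact h2
  have h5 : 0 < (1 - α) ^ (1 - α) := by positivity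
  refine le_trans (mul_le_mul_of_nonneg_right h4 h5.le) (le_of_eq ?_)
  have hp : ((1 - α) ^ 2 : ℝ) ^ α = ((1 - α) ^ α) ^ 2 := by
    rw [← Real.rpow_natCast, ← Real.rpow_natCast, ← Real.rpow_mul hβ.le, ← Real.rpow_mul hβ.le,
      mul_comm]
  rw [Real.div_rpow ha.le (by positivity), Real.mul_rpow hD.le (by positivity), hp,
    Real.div_rpow ha.le hβ.le, Real.rpow_sub hβ, Real.rpow_sub ha, Real.rpow_one, Real.rpow_one]
  have : 0 < a ^ α := by positivity
  have : 0 < (1 - α) ^ α := by positivity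
  have : 0 < D ^ α := by positivity
  field_simp

lemma bethe_two {a B C D K α : ℝ} (h0 : 0 ≤ α) (h1 : α ≤ 1) (ha : 0 ≤ a) (hB : 0 ≤ B) (hC : 0 ≤ C)
    (hD : 0 ≤ D) (hBC : B * C ≤ a * D)
    (h : ∀ s t : ℝ, 0 < s → 0 < t →
      K * (s * t) ^ α ≤ a + α * B * s + α * C * t + α ^ 2 * D * (s * t)) :
    K * (1 - α) ^ (1 - α) ≤ a + α * D := by
  rcases h0.eq_or_lt with rfl | h0
  · simpa using h 1 1 one_pos one_pos
  rcases h1.eq_or_lt with rfl | h1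
  · simp only [sub_self, Real.rpow_zero, mul_one, one_mul]
    have hlim : Filter.Tendsto (fun s : ℝ => a * s ^ 2 + (B + C) * s + D)
        (nhdsWithin 0 (Set.Ioi 0)) (nhds D) := by
      have : Continuous (fun s : ℝ => a * s ^ 2 + (B + C) * s + D) := by fun_prop
      have h2 := (this.tendsto 0).mono_left (nhdsWithin_le_nhds (s := Set.Ioi 0))
      simpa using h2
    have : K ≤ D := by
      apply ge_of_tendsto hlim
      filter_upwards [self_mem_nhdsWithin] with s hs
      have hs : 0 < s := hs
      have h2 := h s⁻¹ s⁻¹ (by positivity) (by positivity)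
      simp only [Real.rpow_one] at h2
      have h3 := mul_le_mul_of_nonneg_right h2 (sq_nonneg s)
      have e : K * (s⁻¹ * s⁻¹) * s ^ 2 = K := by field_simp
      rw [e] at h3
      refine h3.trans (le_of_eq ?_)
      field_simp
      ring
    linarith
  · have key : ∀ ε : ℝ, 0 < ε → K * (1 - α) ^ (1 - α) ≤ (a + ε) + α * (D + ε) := by
      intro ε hε
      have hmul : B * C ≤ (a + ε) * (D + ε) := by nlinarith
      have hex : ∃ B' C', B ≤ B' ∧ C ≤ C' ∧ 0 < B' ∧ 0 < C' ∧ B' * C' = (a + ε) * (D + ε) := by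
        rcases hB.eq_or_lt with rfl | hB
        · exact ⟨(a + ε) * (D + ε) / (C + 1), C + 1, by positivity, by linarith, by positivity,
            by positivity, by field_simp⟩
        · exact ⟨B, (a + ε) * (D + ε) / B, le_rfl, by rw [le_div_iff₀ hB]; linarith, hB,
            by positivity, by field_simp⟩
      obtain ⟨B', C', hB', hC', pB, pC, hE⟩ := hex
      apply bethe_pos h0 h1 (by positivity) pB pC (by positivity) hE
      intro s t hs ht
      refine (h s t hs ht).trans ?_
      have : a ≤ a + ε := by linarith
      have : D ≤ D + ε := by linarith
      gcongr
    apply le_of_forall_pos_le_add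
    intro δ hδ
    have := key (δ / (1 + α)) (by positivity)
    have e : (a + δ / (1 + α)) + α * (D + δ / (1 + α)) = a + α * D + δ := by
      field_simp
      ring
    linarith

/-- Row weights coming from the edges not yet in `L`. -/
noncomputable def rw_ {n : ℕ} (A : Fin n → Fin n → ℝ) (L : List (Fin n × Fin n))
    (y : Fin n × Fin n → ℝ) (i : Fin n) : ℝ :=
  ∑ j, if (i, j) ∈ L then 0 else A i j * y (i, j)

/-- Column weights coming from the edges not yet in `L`. -/
noncomputable def cw_ {n : ℕ} (A : Fin n → Fin n → ℝ) (L : List (Fin n × Fin n))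
    (z : Fin n × Fin n → ℝ) (j : Fin n) : ℝ :=
  ∑ i, if (i, j) ∈ L then 0 else A i j * z (i, j)

lemma rw_update {n : ℕ} (A : Fin n → Fin n → ℝ) (L : List (Fin n × Fin n))
    (y : Fin n × Fin n → ℝ) (i j : Fin n) (h : (i, j) ∉ L) (s : ℝ) :
    rw_ A L (Function.update y (i, j) s) =
      fun k => rw_ A ((i, j) :: L) y k + if k = i then A i j * s else 0 := by
  funext k
  unfold rw_
  by_cases hk : k = i
  · subst hk
    rw [← Finset.add_sum_erase _ _ (Finset.mem_univ j),
      ← Finset.add_sum_erase _ (fun l => if (k, l) ∈ (k, j) :: L then 0 else A k l * y (k, l))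
        (Finset.mem_univ j)]
    have : ∀ l ∈ Finset.univ.erase j, (if (k, l) ∈ L then 0 else A k l *
        Function.update y (k, j) s (k, l)) =
          (if (k, l) ∈ (k, j) :: L then 0 else A k l * y (k, l)) := by
      intro l hl
      have hl := (Finset.mem_erase.1 hl).1
      simp [hl, Function.update]
    rw [Finset.sum_congr rfl this]
    simp [h]
    ring
  · simp only [hk, if_false, add_zero]
    apply Finset.sum_congr rfl
    intro l _
    simp [hk, Function.update]

lemma cw_update {n : ℕ} (A : Fin n → Fin n → ℝ) (L : List (Fin n × Fin n))
    (y : Fin n × Fin n → ℝ) (i j : Fin n) (h : (i, j) ∉ L) (s : ℝ) :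
    cw_ A L (Function.update y (i, j) s) =
      fun k => cw_ A ((i, j) :: L) y k + if k = j then A i j * s else 0 := by
  funext k
  unfold cw_
  by_cases hk : k = j
  · subst hk
    rw [← Finset.add_sum_erase _ _ (Finset.mem_univ i),
      ← Finset.add_sum_erase _ (fun l => if (l, k) ∈ (i, k) :: L then 0 else A l k * y (l, k))
        (Finset.mem_univ i)]
    have : ∀ l ∈ Finset.univ.erase i, (if (l, k) ∈ L then 0 else A l k *
        Function.update y (i, k) s (l, k)) =
          (if (l, k) ∈ (i, k) :: L then 0 else A l k * y (l, k)) := by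
      intro l hl
      have hl := (Finset.mem_erase.1 hl).1
      simp [hl, Function.update]
    rw [Finset.sum_congr rfl this]
    simp [h]
    ring
  · simp only [hk, if_false, add_zero]
    apply Finset.sum_congr rfl
    intro l _
    simp [hk, Function.update]

lemma bethe_main {n : ℕ} (A : Fin n → Fin n → ℝ)
    (hnn : ∀ i j, 0 ≤ A i j)
    (hrow : ∀ i, ∑ j, A i j = 1)
    (hcol : ∀ j, ∑ i, A i j = 1) (L : List (Fin n × Fin n)) (hL : L.Nodup) :
    ∀ y z : Fin n × Fin n → ℝ, (∀ e, 0 < y e) → (∀ e, 0 < z e) →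
      (∏ e : Fin n × Fin n, if e ∈ L then (1 - A e.1 e.2) ^ (1 - A e.1 e.2) else
        (y e * z e) ^ (A e.1 e.2)) ≤ mdZ A (rw_ A L y) (cw_ A L z) L Finset.univ Finset.univ := by
  induction L with
  | nil =>
    intro y z hy hz
    simp only [List.not_mem_nil, if_false, mdZ]
    have h1 : ∏ e : Fin n × Fin n, (y e * z e) ^ (A e.1 e.2) =
        (∏ i, ∏ j, y (i, j) ^ A i j) * ∏ j, ∏ i, z (i, j) ^ A i j := by
      rw [Finset.prod_comm (f := fun j i => z (i, j) ^ A i j), Fintype.prod_prod_type,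
        ← Finset.prod_mul_distrib]
      apply Finset.prod_congr rfl
      intro i _
      rw [← Finset.prod_mul_distrib]
      apply Finset.prod_congr rfl
      intro j _
      exact Real.mul_rpow (hy _).le (hz _).le
    rw [h1]
    have hyy : ∀ e (b : ℝ), 0 ≤ y e ^ b := fun e b => Real.rpow_nonneg (hy e).le b
    have hzz : ∀ e (b : ℝ), 0 ≤ z e ^ b := fun e b => Real.rpow_nonneg (hz e).le b
    have ha : ∏ i, ∏ j, y (i, j) ^ A i j ≤ ∏ i, rw_ A [] y i := by
      apply Finset.prod_le_prod
      · intro i _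
        exact Finset.prod_nonneg fun j _ => hyy _ _
      · intro i _
        have := Real.geom_mean_le_arith_mean_weighted Finset.univ (A i) (fun j => y (i, j))
          (fun j _ => hnn i j) (hrow i) (fun j _ => (hy _).le)
        simpa [rw_] using this
    have hb : ∏ j, ∏ i, z (i, j) ^ A i j ≤ ∏ j, cw_ A [] z j := by
      apply Finset.prod_le_prod
      · intro i _
        exact Finset.prod_nonneg fun j _ => hzz _ _
      · intro j _
        have := Real.geom_mean_le_arith_mean_weighted Finset.univ (fun i => A i j)
          (fun i => z (i, j)) (fun i _ => hnn i j) (hcol j) (fun j _ => (hz _).le)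
        simpa [cw_] using this
    have h2 : 0 ≤ ∏ j, ∏ i, z (i, j) ^ A i j :=
      Finset.prod_nonneg fun j _ => Finset.prod_nonneg fun i _ => hzz _ _
    have h3 : 0 ≤ ∏ i, ∏ j, y (i, j) ^ A i j :=
      Finset.prod_nonneg fun j _ => Finset.prod_nonneg fun i _ => hyy _ _
    exact mul_le_mul ha hb h2 (h3.trans ha)
  | cons e L ih =>
    intro y z hy hz
    obtain ⟨i, j⟩ := e
    rw [List.nodup_cons] at hL
    obtain ⟨heL, hL⟩ := hL
    have hr : ∀ k, 0 ≤ rw_ A ((i, j) :: L) y k := by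
      intro k
      apply Finset.sum_nonneg
      intro l _
      split_ifs
      · exact le_rfl
      · exact mul_nonneg (hnn _ _) (hy _).le
    have hc : ∀ k, 0 ≤ cw_ A ((i, j) :: L) z k := by
      intro k
      apply Finset.sum_nonneg
      intro l _
      split_ifs
      · exact le_rfl
      · exact mul_nonneg (hnn _ _) (hz _).le
    have hA1 : A i j ≤ 1 := by
      rw [← hrow i]
      exact Finset.single_le_sum (f := fun j => A i j) (fun k _ => hnn i k) (Finset.mem_univ j)
    simp only [mdZ, Finset.mem_univ, and_self, if_true]
    rw [← Finset.prod_erase_mul _ _ (Finset.mem_univ (i, j))]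
    simp only [List.mem_cons_self, if_true]
    have hN := mdZ_nonneg A _ _ hnn hr hc L
    apply bethe_two (hnn i j) hA1 (hN _ _) (hN _ _) (hN _ _) (hN _ _)
      (mdZ_corr A _ _ hnn hr hc L _ _ _ i j le_rfl (Finset.mem_univ i) (Finset.mem_univ j))
    intro s t hs ht
    have h := ih hL (Function.update y (i, j) s) (Function.update z (i, j) t) ?_ ?_
    · rw [rw_update A L y i j heL, cw_update A L z i j heL,
        mdZ_shift_row _ _ _ _ _ _ _ _ (Finset.mem_univ i),
        mdZ_shift_col _ _ _ _ _ _ _ _ (Finset.mem_univ j),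
        mdZ_shift_col _ _ _ _ _ _ _ _ (Finset.mem_univ j),
        ← Finset.prod_erase_mul _ _ (Finset.mem_univ (i, j))] at h
      simp only [heL, if_false, Function.update_self] at h
      have hp : ∀ e ∈ Finset.univ.erase (i, j),
          (if e ∈ L then (1 - A e.1 e.2) ^ (1 - A e.1 e.2) else
            (Function.update y (i, j) s e * Function.update z (i, j) t e) ^ (A e.1 e.2)) =
          (if e ∈ (i, j) :: L then (1 - A e.1 e.2) ^ (1 - A e.1 e.2) else
            (y e * z e) ^ (A e.1 e.2)) := by
        intro e he
        have he := (Finset.mem_erase.1 he).1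
        rw [Function.update_of_ne he, Function.update_of_ne he]
        simp [List.mem_cons, he]
      rw [Finset.prod_congr rfl hp] at h
      refine h.trans (le_of_eq ?_)
      ring
    · intro e
      by_cases he : e = (i, j)
      · rw [he, Function.update_self]; exact hs
      · rw [Function.update_of_ne he]; exact hy e
    · intro e
      by_cases he : e = (i, j)
      · rw [he, Function.update_self]; exact ht
      · rw [Function.update_of_ne he]; exact hz e

theorem stmt_0 {n : ℕ} (A : Matrix (Fin n) (Fin n) ℝ)
    (hnn : ∀ i j, 0 ≤ A i j)
    (hrow : ∀ i, ∑ j, A i j = 1)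
    (hcol : ∀ j, ∑ i, A i j = 1) :
    perm A ≥ ∏ i, ∏ j, (1 - A i j) ^ (1 - A i j) := by
  have hnd : (Finset.univ : Finset (Fin n × Fin n)).toList.Nodup := Finset.nodup_toList _
  have hmem : ∀ e, e ∈ (Finset.univ : Finset (Fin n × Fin n)).toList := by simp
  have h := bethe_main A hnn hrow hcol _ hnd (fun _ => 1) (fun _ => 1)
    (fun _ => one_pos) (fun _ => one_pos)
  have hr : rw_ A (Finset.univ : Finset (Fin n × Fin n)).toList (fun _ => 1) = fun _ => 0 := by
    funext i; simp [rw_]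
  have hc : cw_ A (Finset.univ : Finset (Fin n × Fin n)).toList (fun _ => 1) = fun _ => 0 := by
    funext i; simp [cw_]
  have hp := mdZ_perm A (Finset.univ : Finset (Fin n × Fin n)).toList
    (fun e => List.count_eq_one_of_mem hnd (hmem e)) Finset.univ 1
  simp only [Finset.mem_univ, not_true_eq_false, false_imp_iff, implies_true, if_true] at hp
  have himg : (Finset.univ : Finset (Fin n)).image (1 : Equiv.Perm (Fin n)) = Finset.univ := by
    simp
  rw [himg] at hp
  rw [hr, hc, hp] at h
  simp only [hmem, if_true] at h
  rw [Fintype.prod_prod_type] at h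
  exact h
end

section
/- Let A = (a_ij) be an n×n nonnegative matrix and B = (b_ij) a doubly stochastic n×n matrix with the support of B contained in the support of A. Then Per(A) ≥ ∏_{i,j} (1-b_ij)^{1-b_ij} · exp(-∑_{i,j} b_ij · log(b_ij / a_ij)), where terms with b_ij = 0 contribute 0 to the sum. -/
open scoped BigOperators

/-- Matching polynomial with vertex weights `r`, `c` and edge weights `w`. -/
noncomputable def PM {ι : Type} [DecidableEq ι] (w : ι → ι → ℝ) (r c : ι → ℝ) :
    List ι → Finset ι → ℝ
  | [], C => ∏ j ∈ C, c j
  | i :: L, C => r i * PM w r c L C + ∑ k ∈ C, w i k * PM w r c L (C.erase k)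

section PMlemmas
variable {ι : Type} [DecidableEq ι]

theorem PM_cons (w : ι → ι → ℝ) (r c : ι → ℝ) (i : ι) (L : List ι) (C : Finset ι) :
    PM w r c (i :: L) C = r i * PM w r c L C + ∑ k ∈ C, w i k * PM w r c L (C.erase k) := rfl

theorem PM_nonneg (w : ι → ι → ℝ) (r c : ι → ℝ) (hw : ∀ i j, 0 ≤ w i j)
    (hr : ∀ i, 0 ≤ r i) (hc : ∀ i, 0 ≤ c i) (L : List ι) (C : Finset ι) :
    0 ≤ PM w r c L C := by
  induction L generalizing C with
  | nil => exact Finset.prod_nonneg fun j _ => hc j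
  | cons i L ih =>
    rw [PM_cons]
    exact add_nonneg (mul_nonneg (hr i) (ih _))
      (Finset.sum_nonneg fun k _ => mul_nonneg (hw i k) (ih _))

theorem PM_perm (w : ι → ι → ℝ) (r c : ι → ℝ) {L L' : List ι} (h : L.Perm L') :
    ∀ C : Finset ι, PM w r c L C = PM w r c L' C := by
  induction h with
  | nil => intro C; rfl
  | cons x _ ih => intro C; simp only [PM_cons, ih]
  | trans _ _ ih1 ih2 => intro C; rw [ih1, ih2]
  | swap x y L =>
    intro C
    simp only [PM_cons, mul_add, Finset.sum_add_distrib, Finset.mul_sum]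
    have key : ∑ k ∈ C, ∑ i ∈ C.erase k, w y k * (w x i * PM w r c L ((C.erase k).erase i))
        = ∑ k ∈ C, ∑ i ∈ C.erase k, w x k * (w y i * PM w r c L ((C.erase k).erase i)) := by
      rw [Finset.sum_comm' (s' := fun i => C.erase i) (t' := C)]
      · refine Finset.sum_congr rfl fun i _ => Finset.sum_congr rfl fun k _ => ?_
        rw [Finset.erase_right_comm]; ring
      · intro a b; simp only [Finset.mem_erase]; tauto
    rw [key]
    have e1 : ∀ x y : ι, ∑ i ∈ C, r y * (w x i * PM w r c L (C.erase i)) =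
      ∑ i ∈ C, w x i * (r y * PM w r c L (C.erase i)) := fun x y =>
      Finset.sum_congr rfl fun i _ => by ring
    rw [e1 x y, e1 y x]; ring

theorem PM_col (w : ι → ι → ℝ) (r c : ι → ℝ) (L : List ι) (hL : L.Nodup) (C : Finset ι)
    (j : ι) (hj : j ∈ C) :
    PM w r c L C = c j * PM w r c L (C.erase j)
      + ∑ i ∈ L.toFinset, w i j * PM w r c (L.erase i) (C.erase j) := by
  induction L generalizing C with
  | nil => simp [PM, Finset.mul_prod_erase C c hj]
  | cons a L ih =>
    have haL : a ∉ L := (List.nodup_cons.mp hL).1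
    have hL' : L.Nodup := (List.nodup_cons.mp hL).2
    have h1 : ∀ i ∈ L.toFinset, w i j * PM w r c ((a :: L).erase i) (C.erase j) =
        w i j * (r a * PM w r c (L.erase i) (C.erase j) +
          ∑ k ∈ C.erase j, w a k * PM w r c (L.erase i) ((C.erase j).erase k)) := by
      intro i hi
      have : a ≠ i := by rintro rfl; exact haL (List.mem_toFinset.mp hi)
      rw [List.erase_cons_tail (by simpa using this), PM_cons]
    have h2 : ∀ k ∈ C.erase j, w a k * PM w r c L (C.erase k) =
        w a k * (c j * PM w r c L ((C.erase j).erase k) +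
         ∑ i ∈ L.toFinset, w i j * PM w r c (L.erase i) ((C.erase j).erase k)) := by
      intro k hk
      rw [ih hL' (C.erase k) (Finset.mem_erase.mpr ⟨(Finset.mem_erase.mp hk).1.symm, hj⟩),
        Finset.erase_right_comm]
    rw [List.toFinset_cons, Finset.sum_insert (by simpa using haL), Finset.sum_congr rfl h1,
      List.erase_cons_head, PM_cons, PM_cons, ← Finset.add_sum_erase C _ hj,
      Finset.sum_congr rfl h2, ih hL' C hj]
    simp only [mul_add, Finset.sum_add_distrib, Finset.mul_sum]
    rw [Finset.sum_comm (s := L.toFinset) (t := C.erase j)]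
    have e1 : ∑ i ∈ L.toFinset, r a * (w i j * PM w r c (L.erase i) (C.erase j)) =
      ∑ i ∈ L.toFinset, w i j * (r a * PM w r c (L.erase i) (C.erase j)) :=
      Finset.sum_congr rfl fun i _ => by ring
    have e2 : ∑ k ∈ C.erase j, w a k * (c j * PM w r c L ((C.erase j).erase k)) =
      ∑ k ∈ C.erase j, c j * (w a k * PM w r c L ((C.erase j).erase k)) :=
      Finset.sum_congr rfl fun i _ => by ring
    have e3 : ∑ k ∈ C.erase j, ∑ i ∈ L.toFinset,
        w a k * (w i j * PM w r c (L.erase i) ((C.erase j).erase k)) =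
      ∑ k ∈ C.erase j, ∑ i ∈ L.toFinset,
        w i j * (w a k * PM w r c (L.erase i) ((C.erase j).erase k)) :=
      Finset.sum_congr rfl fun i _ => Finset.sum_congr rfl fun i _ => by ring
    rw [e1, e2, e3]; ring

/-- The two correlation inequalities, by simultaneous induction. -/
theorem PM_opp_same (w : ι → ι → ℝ) (r c : ι → ℝ) (hw : ∀ i j, 0 ≤ w i j)
    (hr : ∀ i, 0 ≤ r i) (hc : ∀ i, 0 ≤ c i) (m : ℕ) :
    (∀ (L : List ι) (C : Finset ι) (j k : ι), L.length = m → L.Nodup → j ∈ C → k ∈ C → j ≠ k →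
      PM w r c L C * PM w r c L ((C.erase j).erase k) ≤
        PM w r c L (C.erase j) * PM w r c L (C.erase k)) ∧
    (∀ (i : ι) (L : List ι) (C : Finset ι) (j : ι), L.length = m → (i :: L).Nodup → j ∈ C →
      PM w r c L C * PM w r c (i :: L) (C.erase j) ≤
        PM w r c (i :: L) C * PM w r c L (C.erase j)) := by
  have step : ∀ m : ℕ, (∀ (L : List ι) (C : Finset ι) (j k : ι), L.length = m → L.Nodup →
      j ∈ C → k ∈ C → j ≠ k →
      PM w r c L C * PM w r c L ((C.erase j).erase k) ≤
        PM w r c L (C.erase j) * PM w r c L (C.erase k)) →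
    (∀ (i : ι) (L : List ι) (C : Finset ι) (j : ι), L.length = m → (i :: L).Nodup → j ∈ C →
      PM w r c L C * PM w r c (i :: L) (C.erase j) ≤
        PM w r c (i :: L) C * PM w r c L (C.erase j)) := by
    intro m hs i L C j hm hL hj
    have hL' : L.Nodup := (List.nodup_cons.mp hL).2
    rw [PM_cons, PM_cons, ← Finset.add_sum_erase C _ hj]
    have h : ∑ k ∈ C.erase j, w i k * PM w r c L ((C.erase j).erase k) * PM w r c L C ≤
        ∑ k ∈ C.erase j, w i k * PM w r c L (C.erase k) * PM w r c L (C.erase j) := by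
      refine Finset.sum_le_sum fun k hk => ?_
      have hk' := Finset.mem_erase.mp hk
      have := hs L C j k hm hL' hj hk'.2 hk'.1.symm
      have := mul_le_mul_of_nonneg_left this (hw i k)
      linarith
    rw [← Finset.sum_mul, ← Finset.sum_mul] at h
    have h0 : 0 ≤ w i j * (PM w r c L (C.erase j) * PM w r c L (C.erase j)) :=
      mul_nonneg (hw i j) (mul_self_nonneg _)
    linarith
  have same : ∀ m : ℕ, (∀ (L : List ι) (C : Finset ι) (j k : ι), L.length = m → L.Nodup →
      j ∈ C → k ∈ C → j ≠ k →
      PM w r c L C * PM w r c L ((C.erase j).erase k) ≤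
        PM w r c L (C.erase j) * PM w r c L (C.erase k)) := by
    intro m
    induction m with
    | zero =>
      intro L C j k hm hL hj hk hjk
      have := List.length_eq_zero_iff.mp hm
      subst this
      have hkj : j ∈ C.erase k := Finset.mem_erase.mpr ⟨hjk, hj⟩
      simp only [PM]
      rw [← Finset.mul_prod_erase C c hj, ← Finset.mul_prod_erase (C.erase k) c hkj,
        Finset.erase_right_comm (a := k)]
      apply le_of_eq; ring
    | succ m ihm =>
      intro L C j k hm hL hj hk hjk
      have hkj : j ∈ C.erase k := Finset.mem_erase.mpr ⟨hjk, hj⟩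
      have hjk' : k ∈ C.erase j := Finset.mem_erase.mpr ⟨hjk.symm, hk⟩
      rw [PM_col w r c L hL C j hj, PM_col w r c L hL (C.erase k) j hkj,
        Finset.erase_right_comm (a := k)]
      have h : ∑ i ∈ L.toFinset, w i j * PM w r c (L.erase i) (C.erase j) *
            PM w r c L ((C.erase j).erase k) ≤
          ∑ i ∈ L.toFinset, w i j * PM w r c (L.erase i) ((C.erase j).erase k) *
            PM w r c L (C.erase j) := by
        refine Finset.sum_le_sum fun i hi => ?_
        have hi' : i ∈ L := List.mem_toFinset.mp hi
        have hp := List.perm_cons_erase hi'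
        rw [PM_perm w r c hp, PM_perm w r c hp]
        have hlen : (L.erase i).length = m := by rw [List.length_erase_of_mem hi', hm]; rfl
        have := step m ihm i (L.erase i) (C.erase j) k hlen (hp.nodup_iff.mp hL) hjk'
        have := mul_le_mul_of_nonneg_left this (hw i j)
        linarith
      rw [← Finset.sum_mul, ← Finset.sum_mul] at h
      linarith
  exact ⟨same m, step m (same m)⟩

theorem PM_congr (w w' : ι → ι → ℝ) (r r' c c' : ι → ℝ) (L : List ι) (C : Finset ι)
    (hw : ∀ i ∈ L, ∀ j ∈ C, w i j = w' i j) (hr : ∀ i ∈ L, r i = r' i)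
    (hc : ∀ j ∈ C, c j = c' j) : PM w r c L C = PM w' r' c' L C := by
  induction L generalizing C with
  | nil => exact Finset.prod_congr rfl hc
  | cons a L ih =>
    rw [PM_cons, PM_cons, hr a (by simp),
      ih C (fun i hi => hw i (by simp [hi])) (fun i hi => hr i (by simp [hi])) hc]
    congr 1
    refine Finset.sum_congr rfl fun k hk => ?_
    rw [hw a (by simp) k hk, ih (C.erase k)
      (fun i hi j hj => hw i (by simp [hi]) j (Finset.mem_of_mem_erase hj))
      (fun i hi => hr i (by simp [hi])) (fun j hj => hc j (Finset.mem_of_mem_erase hj))]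

/-- Change of one row weight. -/
theorem PM_row_change (w : ι → ι → ℝ) (r r' c : ι → ℝ) (i : ι) (L : List ι) (hi : i ∉ L)
    (C : Finset ι) (u : ℝ) (h1 : r' i = r i + u) (h2 : ∀ k, k ≠ i → r' k = r k) :
    PM w r' c (i :: L) C = PM w r c (i :: L) C + u * PM w r c L C := by
  have hh : ∀ C, PM w r' c L C = PM w r c L C := fun C =>
    PM_congr _ _ _ _ _ _ _ _ (fun _ _ _ _ => rfl)
      (fun k hk => h2 k (by rintro rfl; exact hi hk)) (fun _ _ => rfl)
  simp only [PM_cons, hh, h1]; ring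

/-- Change of one column weight. -/
theorem PM_col_change (w : ι → ι → ℝ) (r c c' : ι → ℝ) (j : ι) (L : List ι) (hL : L.Nodup)
    (C : Finset ι) (hj : j ∈ C) (v : ℝ) (h1 : c' j = c j + v) (h2 : ∀ k, k ≠ j → c' k = c k) :
    PM w r c' L C = PM w r c L C + v * PM w r c L (C.erase j) := by
  have hh : ∀ L, PM w r c' L (C.erase j) = PM w r c L (C.erase j) := fun L =>
    PM_congr _ _ _ _ _ _ _ _ (fun _ _ _ _ => rfl) (fun _ _ => rfl)
      (fun k hk => h2 k (Finset.mem_erase.mp hk).1)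
  rw [PM_col w r c' L hL C j hj, PM_col w r c L hL C j hj]
  simp only [hh, h1]; ring

/-- Change of one edge weight. -/
theorem PM_edge_change (w w' : ι → ι → ℝ) (r c : ι → ℝ) (i j : ι) (L : List ι) (hi : i ∉ L)
    (C : Finset ι) (hj : j ∈ C) (a : ℝ) (h1 : w' i j = w i j + a)
    (h2 : ∀ k l, (k ≠ i ∨ l ≠ j) → w' k l = w k l) :
    PM w' r c (i :: L) C = PM w r c (i :: L) C + a * PM w r c L (C.erase j) := by
  have hh : ∀ C, PM w' r c L C = PM w r c L C := fun C =>
    PM_congr _ _ _ _ _ _ _ _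
      (fun k hk l _ => h2 k l (Or.inl (by rintro rfl; exact hi hk))) (fun _ _ => rfl)
      (fun _ _ => rfl)
  simp only [PM_cons, hh, ← Finset.add_sum_erase C _ hj, h1]
  have : ∑ k ∈ C.erase j, w' i k * PM w r c L (C.erase k) =
      ∑ k ∈ C.erase j, w i k * PM w r c L (C.erase k) :=
    Finset.sum_congr rfl fun k hk => by rw [h2 i k (Or.inr (Finset.mem_erase.mp hk).1)]
  rw [this]; ring

theorem PM_zero_edges (r c : ι → ℝ) (L : List ι) (C : Finset ι) :
    PM (fun _ _ => 0) r c L C = (L.map r).prod * ∏ j ∈ C, c j := by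
  induction L generalizing C with
  | nil => simp [PM]
  | cons a L ih => simp [PM_cons, ih, mul_assoc]

theorem PM_perm_sum [Fintype ι] (w : ι → ι → ℝ) (L : List ι) (hL : L.Nodup)
    (τ : Equiv.Perm ι) :
    PM w (fun _ => 0) (fun _ => 0) L (L.toFinset.image τ) =
      ∑ σ : Equiv.Perm ι with (∀ i, i ∉ L → σ i = τ i), ∏ i ∈ L.toFinset, w i (σ i) := by
  induction L generalizing τ with
  | nil =>
    have : (Finset.univ.filter fun σ : Equiv.Perm ι => ∀ i, i ∉ ([] : List ι) → σ i = τ i) = {τ} := by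
      ext σ; simp [Equiv.ext_iff]
    rw [this]; simp [PM]
  | cons a L ih =>
    have haL : a ∉ L := (List.nodup_cons.mp hL).1
    have hL' : L.Nodup := (List.nodup_cons.mp hL).2
    rw [PM_cons, zero_mul, zero_add]
    rw [← Finset.sum_fiberwise_of_maps_to (g := fun σ : Equiv.Perm ι => σ a)
      (t := (a :: L).toFinset.image τ)]
    · refine Finset.sum_congr rfl fun k hk => ?_
      obtain ⟨m, hm, rfl⟩ := Finset.mem_image.mp hk
      have himg : ((a :: L).toFinset.image τ).erase (τ m) =
          L.toFinset.image (τ * Equiv.swap a m) := by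
        ext x
        obtain ⟨x, rfl⟩ := τ.surjective x
        simp only [Finset.mem_erase, Finset.mem_image, List.mem_toFinset, ne_eq,
          EmbeddingLike.apply_eq_iff_eq, exists_eq_right, Equiv.Perm.coe_mul, Function.comp_apply,
          List.mem_cons]
        simp only [List.mem_toFinset, List.mem_cons] at hm
        constructor
        · rintro ⟨h1, h2⟩
          refine ⟨Equiv.swap a m x, ?_, by simp⟩
          rcases eq_or_ne x a with rfl | hxa
          · rw [Equiv.swap_apply_left]
            rcases hm with rfl | hm
            · exact absurd rfl h1
            · exact hm
          · rw [Equiv.swap_apply_of_ne_of_ne hxa h1]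
            tauto
        · rintro ⟨y, hy, rfl⟩
          have hya : y ≠ a := by rintro rfl; exact haL hy
          rcases eq_or_ne y m with rfl | hym
          · rw [Equiv.swap_apply_right]; exact ⟨hya.symm, Or.inl rfl⟩
          · rw [Equiv.swap_apply_of_ne_of_ne hya hym]; exact ⟨hym, Or.inr hy⟩
      rw [himg, ih hL', Finset.mul_sum]
      refine Finset.sum_congr ?_ ?_
      · ext σ
        rw [Finset.mem_filter, Finset.mem_filter, Finset.mem_filter]
        simp only [Finset.mem_univ, true_and, List.mem_cons, not_or,
          Equiv.Perm.coe_mul, Function.comp_apply]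
        simp only [List.mem_toFinset, List.mem_cons] at hm
        constructor
        · intro h
          refine ⟨fun i hi => ?_, by rw [h a haL, Equiv.swap_apply_left]⟩
          rw [h i hi.2, Equiv.swap_apply_of_ne_of_ne hi.1]
          rintro rfl
          tauto
        · rintro ⟨h, h2⟩ i hi
          rcases eq_or_ne i a with rfl | hia
          · rw [Equiv.swap_apply_left, h2]
          · rw [h i ⟨hia, hi⟩, Equiv.swap_apply_of_ne_of_ne hia]
            rintro rfl
            tauto
      · intro σ hσ
        have h2 := (Finset.mem_filter.mp hσ).2
        rw [List.toFinset_cons, Finset.prod_insert (by simpa using haL), h2]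
    · intro σ hσ
      have hσ' := (Finset.mem_filter.mp hσ).2
      by_contra hcon
      obtain ⟨m, hm⟩ := τ.surjective (σ a)
      have hmL : m ∉ a :: L := by
        intro h
        exact hcon (Finset.mem_image.mpr ⟨m, by simpa using h, hm⟩)
      have := hσ' m hmL
      rw [hm] at this
      have := σ.injective this
      subst this
      simp at hmL

theorem PM_univ [Fintype ι] (w : ι → ι → ℝ) :
    PM w (fun _ => 0) (fun _ => 0) Finset.univ.toList Finset.univ =
      ∑ σ : Equiv.Perm ι, ∏ i, w i (σ i) := by
  have e4 := PM_perm_sum w Finset.univ.toList (Finset.nodup_toList _) 1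
  have e5 : (Finset.univ.toList.toFinset.image (1 : Equiv.Perm ι)) = Finset.univ := by
    ext i; simp
  rw [e5] at e4
  rw [e4]
  refine Finset.sum_congr ?_ fun σ _ => ?_
  · ext σ; rw [Finset.mem_filter]; simp
  · rw [Finset.toList_toFinset]

end PMlemmas


theorem one_step_pos (A B C D K a b : ℝ) (hA : 0 < A) (hB : 0 ≤ B) (hC : 0 ≤ C) (hD : 0 < D)
    (hK : 0 ≤ K) (ha : 0 ≤ a) (hb0 : 0 < b) (hb1 : b < 1) (hAD : B * C ≤ A * D)
    (h : ∀ u v : ℝ, 0 < u → 0 < v → K * ((u / b) ^ b * (v / b) ^ b) ≤ A + u * B + v * C + u * v * D) :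
    K * ((a / b) ^ b * (1 - b) ^ (1 - b)) ≤ A + a * D := by
  have h1b : 0 < 1 - b := by linarith
  obtain ⟨B', hB', hBB', hC'⟩ : ∃ B' : ℝ, 0 < B' ∧ B ≤ B' ∧ C ≤ A * D / B' := by
    rcases hB.eq_or_lt with h0 | h0
    · rcases hC.eq_or_lt with h1 | h1
      · exact ⟨1, one_pos, by linarith, by rw [← h1]; positivity⟩
      · refine ⟨A * D / C, by positivity, by rw [← h0]; positivity, ?_⟩
        apply le_of_eq; field_simp
    · exact ⟨B, h0, le_rfl, by rw [le_div_iff₀ h0]; linarith⟩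
  have hu : 0 < A / B' * (b / (1 - b)) := by positivity
  have hv : 0 < B' / D * (b / (1 - b)) := by positivity
  have key := h _ _ hu hv
  have e1 : A + A / B' * (b / (1 - b)) * B + B' / D * (b / (1 - b)) * C
      + A / B' * (b / (1 - b)) * (B' / D * (b / (1 - b))) * D ≤ A / (1 - b) ^ 2 := by
    have i1 := mul_le_mul_of_nonneg_left hBB' hu.le
    have i2 := mul_le_mul_of_nonneg_left hC' hv.le
    have : A + A / B' * (b / (1 - b)) * B' + B' / D * (b / (1 - b)) * (A * D / B')
      + A / B' * (b / (1 - b)) * (B' / D * (b / (1 - b))) * D = A / (1 - b) ^ 2 := by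
      field_simp; ring
    linarith
  have e2 : (A / B' * (b / (1 - b)) / b) ^ b * (B' / D * (b / (1 - b)) / b) ^ b
      = A ^ b / (D ^ b * ((1 - b) ^ b) ^ 2) := by
    rw [← Real.mul_rpow (by positivity) (by positivity)]
    have : A / B' * (b / (1 - b)) / b * (B' / D * (b / (1 - b)) / b) = A / (D * ((1 - b) * (1 - b))) := by
      field_simp
    rw [this, Real.div_rpow hA.le (by positivity), Real.mul_rpow hD.le (by positivity),
      Real.mul_rpow h1b.le h1b.le]
    ring
  rw [e2] at key
  have key2 := key.trans e1
  have hAs : A ^ b * A ^ (1 - b) = A := by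
    rw [← Real.rpow_add hA]; simp
  have hbs : (1 - b) ^ b * (1 - b) ^ (1 - b) = 1 - b := by
    rw [← Real.rpow_add h1b]; simp
  have amgm : (A / (1 - b)) ^ (1 - b) * (a * D / b) ^ b ≤ (1 - b) * (A / (1 - b)) + b * (a * D / b) :=
    Real.geom_mean_le_arith_mean2_weighted h1b.le hb0.le (by positivity) (by positivity) (by ring)
  have e3 : (1 - b) * (A / (1 - b)) + b * (a * D / b) = A + a * D := by field_simp
  rw [e3, Real.div_rpow hA.le h1b.le, mul_div_right_comm a D b, Real.mul_rpow (by positivity) hD.le] at amgm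
  refine le_trans ?_ amgm
  have pA : 0 < A ^ b := Real.rpow_pos_of_pos hA _
  have pD : 0 < D ^ b := Real.rpow_pos_of_pos hD _
  have p1 : 0 < (1 - b) ^ b := Real.rpow_pos_of_pos h1b _
  have p2 : 0 < (1 - b) ^ (1 - b) := Real.rpow_pos_of_pos h1b _
  have pa : 0 ≤ (a / b) ^ b := Real.rpow_nonneg (by positivity) _
  generalize hX : A ^ b = X at *
  generalize hY : A ^ (1 - b) = Y at *
  generalize hZ : D ^ b = Z at *
  generalize hP : (1 - b) ^ b = P at *
  generalize hQ : (1 - b) ^ (1 - b) = Q at *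
  generalize hR : (a / b) ^ b = R at *
  have k3 : K * Q ≤ Y / Q * Z := by
    rw [← hAs, ← hbs] at key2
    rw [← mul_div_assoc, div_le_div_iff₀ (by positivity) (by positivity)] at key2
    have : X * P ^ 2 * (K * Q * Q) ≤ X * P ^ 2 * (Y * Z) := by nlinarith
    have := le_of_mul_le_mul_left this (by positivity)
    rw [div_mul_eq_mul_div, le_div_iff₀ p2]; exact this
  calc K * (R * Q) = K * Q * R := by ring
    _ ≤ Y / Q * Z * R := mul_le_mul_of_nonneg_right k3 pa
    _ = _ := by ring

theorem one_step (A B C D K a b : ℝ) (hA : 0 ≤ A) (hB : 0 ≤ B) (hC : 0 ≤ C) (hD : 0 ≤ D)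
    (hK : 0 ≤ K) (ha : 0 ≤ a) (hb0 : 0 ≤ b) (hb1 : b ≤ 1) (hAD : B * C ≤ A * D)
    (h : ∀ u v : ℝ, 0 < u → 0 < v → K * ((u / b) ^ b * (v / b) ^ b) ≤ A + u * B + v * C + u * v * D) :
    K * ((a / b) ^ b * (1 - b) ^ (1 - b)) ≤ A + a * D := by
  rcases hb0.eq_or_lt with h0 | h0
  · subst h0
    simp only [Real.rpow_zero, mul_one, sub_zero, Real.one_rpow] at h ⊢
    have : K ≤ A := by
      refine le_of_forall_pos_le_add fun ε hε => ?_
      have hs : 0 < B + C + D + 1 := by positivity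
      set δ := min 1 (ε / (B + C + D + 1)) with hδ
      have hδ0 : 0 < δ := by positivity
      have hδ1 : δ ≤ 1 := min_le_left _ _
      have hδ2 : δ * (B + C + D + 1) ≤ ε := by
        rw [← le_div_iff₀ hs]; exact min_le_right _ _
      have := h δ δ hδ0 hδ0
      nlinarith [mul_nonneg hδ0.le hD, mul_nonneg (mul_nonneg hδ0.le hD) (sub_nonneg.mpr hδ1)]
    nlinarith [mul_nonneg ha hD]
  rcases hb1.eq_or_lt with h1 | h1
  · subst h1
    simp only [Real.rpow_one, div_one, sub_self, Real.rpow_zero, mul_one] at h ⊢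
    have : K ≤ D := by
      refine le_of_forall_pos_le_add fun ε hε => ?_
      have hs : 0 < B + C + A + 1 := by positivity
      set δ := min 1 (ε / (B + C + A + 1)) with hδ
      have hδ0 : 0 < δ := by positivity
      have hδ1 : δ ≤ 1 := min_le_left _ _
      have hδ2 : δ * (B + C + A + 1) ≤ ε := by
        rw [← le_div_iff₀ hs]; exact min_le_right _ _
      have h3 := h δ⁻¹ δ⁻¹ (by positivity) (by positivity)
      have h4 := mul_le_mul_of_nonneg_left h3 (by positivity : 0 ≤ δ * δ)
      have e1 : δ * δ * (K * (δ⁻¹ * δ⁻¹)) = K := by field_simp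
      have e2 : δ * δ * (A + δ⁻¹ * B + δ⁻¹ * C + δ⁻¹ * δ⁻¹ * D) = δ * δ * A + δ * B + δ * C + D := by
        field_simp
      rw [e1, e2] at h4
      nlinarith [mul_nonneg hδ0.le hA, mul_nonneg (mul_nonneg hδ0.le hA) (sub_nonneg.mpr hδ1)]
    nlinarith [mul_le_mul_of_nonneg_right this ha]
  refine le_of_forall_pos_le_add fun ε hε => ?_
  set δ := ε / (1 + a) with hδ
  have hδ0 : 0 < δ := by positivity
  have := one_step_pos (A + δ) B C (D + δ) K a b (by positivity) hB hC (by positivity) hK ha h0 h1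
    (by nlinarith [mul_nonneg hA hδ0.le, mul_nonneg hD hδ0.le]) (by
      intro u v hu hv
      have := h u v hu hv
      nlinarith [mul_pos (mul_pos hu hv) hδ0])
  have e : δ * (1 + a) = ε := by rw [hδ]; field_simp
  linarith

theorem row_amgm {n : ℕ} (b y : Fin n → ℝ) (hb : ∀ i, 0 ≤ b i) (hs : ∑ i, b i = 1)
    (hy : ∀ i, 0 < y i) : ∏ i, (y i / b i) ^ b i ≤ ∑ i, y i := by
  refine (Real.geom_mean_le_arith_mean_weighted Finset.univ b (fun i => y i / b i)
    (fun i _ => hb i) hs (fun i _ => div_nonneg (hy i).le (hb i))).trans ?_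
  refine Finset.sum_le_sum fun i _ => ?_
  rcases (hb i).eq_or_lt with h | h
  · rw [← h]; simpa using (hy i).le
  · apply le_of_eq; field_simp

/-- Edge weights after processing the entries in `S`. -/
noncomputable def wS {n : ℕ} (A : Matrix (Fin n) (Fin n) ℝ) (S : Finset (Fin n × Fin n)) :
    Fin n → Fin n → ℝ := fun i j => if (i, j) ∈ S then A i j else 0

/-- Row weights after processing the entries in `S`. -/
noncomputable def rS {n : ℕ} (S : Finset (Fin n × Fin n)) (y : Fin n → Fin n → ℝ) :
    Fin n → ℝ := fun i => ∑ j, if (i, j) ∈ S then 0 else y i j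

/-- Column weights after processing the entries in `S`. -/
noncomputable def cS {n : ℕ} (S : Finset (Fin n × Fin n)) (z : Fin n → Fin n → ℝ) :
    Fin n → ℝ := fun j => ∑ i, if (i, j) ∈ S then 0 else z i j

/-- Factor of one entry in the lower bound. -/
noncomputable def tS {n : ℕ} (A B : Matrix (Fin n) (Fin n) ℝ) (S : Finset (Fin n × Fin n))
    (y z : Fin n → Fin n → ℝ) (e : Fin n × Fin n) : ℝ :=
  if e ∈ S then (A e.1 e.2 / B e.1 e.2) ^ B e.1 e.2 * (1 - B e.1 e.2) ^ (1 - B e.1 e.2)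
  else (y e.1 e.2 / B e.1 e.2) ^ B e.1 e.2 * (z e.1 e.2 / B e.1 e.2) ^ B e.1 e.2

theorem main_ind {n : ℕ} (A B : Matrix (Fin n) (Fin n) ℝ)
    (hA : ∀ i j, 0 ≤ A i j)
    (hB : ∀ i j, 0 ≤ B i j)
    (hrow : ∀ i, ∑ j, B i j = 1)
    (hcol : ∀ j, ∑ i, B i j = 1) (S : Finset (Fin n × Fin n)) :
    ∀ y z : Fin n → Fin n → ℝ, (∀ i j, 0 < y i j) → (∀ i j, 0 < z i j) →
      ∏ e, tS A B S y z e ≤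
        PM (wS A S) (rS S y) (cS S z) Finset.univ.toList Finset.univ := by
  have hB1 : ∀ i j, B i j ≤ 1 := fun i j => by
    rw [← hrow i]; exact Finset.single_le_sum (fun k _ => hB i k) (Finset.mem_univ j)
  induction S using Finset.induction_on with
  | empty =>
    intro y z hy hz
    have e1 : wS A ∅ = fun _ _ => 0 := by ext i j; simp [wS]
    have e2 : rS ∅ y = fun i => ∑ j, y i j := by ext i; simp [rS]
    have e3 : cS ∅ z = fun j => ∑ i, z i j := by ext i; simp [cS]
    rw [e1, e2, e3, PM_zero_edges, Finset.prod_map_toList]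
    simp only [tS, Finset.notMem_empty, if_false, Finset.prod_mul_distrib]
    rw [Fintype.prod_prod_type, Fintype.prod_prod_type_right]
    have nn : ∀ y : Fin n → Fin n → ℝ, (∀ i j, 0 < y i j) → ∀ i j,
      0 ≤ (y i j / B i j) ^ B i j := fun y hy i j =>
        Real.rpow_nonneg (div_nonneg (hy i j).le (hB i j)) _
    refine mul_le_mul ?_ ?_ ?_ ?_
    · exact Finset.prod_le_prod (fun i _ => Finset.prod_nonneg fun j _ => nn y hy i j)
        fun i _ => row_amgm (B i) (y i) (hB i) (hrow i) (hy i)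
    · exact Finset.prod_le_prod (fun j _ => Finset.prod_nonneg fun i _ => nn z hz i j)
        fun j _ => row_amgm (fun i => B i j) (fun i => z i j) (fun i => hB i j) (hcol j)
          (fun i => hz i j)
    · exact Finset.prod_nonneg fun j _ => Finset.prod_nonneg fun i _ => nn z hz i j
    · exact Finset.prod_nonneg fun i _ => Finset.sum_nonneg fun j _ => (hy i j).le
  | insert e S heS ih =>
    intro y z hy hz
    obtain ⟨i, j⟩ := e
    set L := (Finset.univ : Finset (Fin n)).toList.erase i with hLdef
    have hp : (Finset.univ : Finset (Fin n)).toList.Perm (i :: L) :=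
      List.perm_cons_erase (by simp)
    have hnd : (i :: L).Nodup := hp.nodup_iff.mp (Finset.nodup_toList _)
    have hiL : i ∉ L := (List.nodup_cons.mp hnd).1
    have hL' : L.Nodup := (List.nodup_cons.mp hnd).2
    set S' := insert (i, j) S with hS'
    have hw : ∀ k l, 0 ≤ wS A S k l := fun k l => by
      unfold wS; split_ifs; exacts [hA k l, le_rfl]
    have hr : ∀ k, 0 ≤ rS S' y k := fun k => Finset.sum_nonneg fun l _ => by
      split_ifs; exacts [le_rfl, (hy k l).le]
    have hc : ∀ k, 0 ≤ cS S' z k := fun k => Finset.sum_nonneg fun l _ => by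
      split_ifs; exacts [le_rfl, (hz l k).le]
    have hpos := PM_nonneg (wS A S) (rS S' y) (cS S' z) hw hr hc
    have hcorr := (PM_opp_same (wS A S) (rS S' y) (cS S' z) hw hr hc L.length).2 i L
      Finset.univ j rfl hnd (Finset.mem_univ j)
    rw [PM_perm _ _ _ hp, PM_edge_change (wS A S) (wS A S') (rS S' y) (cS S' z) i j L hiL
      Finset.univ (Finset.mem_univ j) (A i j) (by simp [wS, hS', heS]) (by
        intro k l hkl
        have : (k, l) ≠ (i, j) := by
          intro h; rw [Prod.mk.injEq] at h; tauto
        simp [wS, hS', Finset.mem_insert, this])]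
    rw [← Finset.mul_prod_erase Finset.univ _ (Finset.mem_univ (i, j))]
    have e1 : tS A B S' y z (i, j) = (A i j / B i j) ^ B i j * (1 - B i j) ^ (1 - B i j) := by
      simp [tS, hS']
    rw [e1, mul_comm]
    refine one_step _ _ _ _ _ _ _ (hpos _ _) (hpos L Finset.univ)
      (hpos (i :: L) (Finset.univ.erase j)) (hpos _ _) ?_ (hA i j) (hB i j) (hB1 i j) hcorr ?_
    · refine Finset.prod_nonneg fun e _ => ?_
      unfold tS
      have h1 := hB1 e.1 e.2
      have h0 := hB e.1 e.2
      have ha := hA e.1 e.2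
      have hy' := hy e.1 e.2
      have hz' := hz e.1 e.2
      have h2 : 0 ≤ 1 - B e.1 e.2 := by linarith
      split_ifs <;> positivity
    · intro u v hu hv
      set y' : Fin n → Fin n → ℝ := fun k l => if (k, l) = (i, j) then u else y k l with hy'
      set z' : Fin n → Fin n → ℝ := fun k l => if (k, l) = (i, j) then v else z k l with hz'
      have := ih y' z' (fun k l => by simp only [hy']; split_ifs; exacts [hu, hy k l])
        (fun k l => by simp only [hz']; split_ifs; exacts [hv, hz k l])
      have er1 : rS S y' i = rS S' y i + u := by
        unfold rS
        rw [← Finset.add_sum_erase _ _ (Finset.mem_univ j),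
          ← Finset.add_sum_erase Finset.univ (fun l => if (i, l) ∈ S' then 0 else y i l)
            (Finset.mem_univ j)]
        have : ∀ l ∈ Finset.univ.erase j, (if (i, l) ∈ S then 0 else y' i l) =
            if (i, l) ∈ S' then 0 else y i l := by
          intro l hl
          have hl' := (Finset.mem_erase.mp hl).1
          simp [hS', hy', hl']
        rw [Finset.sum_congr rfl this]
        simp only [heS, if_false, hS', Finset.mem_insert_self, if_true, hy']
        ring
      have er2 : ∀ k, k ≠ i → rS S y' k = rS S' y k := by
        intro k hk
        refine Finset.sum_congr rfl fun l _ => ?_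
        simp [hS', hy', hk]
      have ec1 : cS S z' j = cS S' z j + v := by
        unfold cS
        rw [← Finset.add_sum_erase _ _ (Finset.mem_univ i),
          ← Finset.add_sum_erase Finset.univ (fun l => if (l, j) ∈ S' then 0 else z l j)
            (Finset.mem_univ i)]
        have : ∀ l ∈ Finset.univ.erase i, (if (l, j) ∈ S then 0 else z' l j) =
            if (l, j) ∈ S' then 0 else z l j := by
          intro l hl
          have hl' := (Finset.mem_erase.mp hl).1
          simp [hS', hz', hl']
        rw [Finset.sum_congr rfl this]
        simp only [heS, if_false, hS', Finset.mem_insert_self, if_true, hz']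
        ring
      have ec2 : ∀ k, k ≠ j → cS S z' k = cS S' z k := by
        intro k hk
        refine Finset.sum_congr rfl fun l _ => ?_
        simp [hS', hz', hk]
      rw [PM_perm _ _ _ hp, PM_row_change (wS A S) (rS S' y) (rS S y') (cS S z') i L hiL
        Finset.univ u er1 er2, PM_col_change (wS A S) (rS S' y) (cS S' z) (cS S z') j (i :: L) hnd
        Finset.univ (Finset.mem_univ j) v ec1 ec2, PM_col_change (wS A S) (rS S' y) (cS S' z)
        (cS S z') j L hL' Finset.univ (Finset.mem_univ j) v ec1 ec2,
        ← Finset.mul_prod_erase Finset.univ _ (Finset.mem_univ (i, j))] at this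
      have e2 : tS A B S y' z' (i, j) = (u / B i j) ^ B i j * (v / B i j) ^ B i j := by
        simp [tS, heS, hy', hz']
      have e3 : ∏ e ∈ Finset.univ.erase (i, j), tS A B S y' z' e =
          ∏ e ∈ Finset.univ.erase (i, j), tS A B S' y z e := by
        refine Finset.prod_congr rfl fun e he => ?_
        have he' := (Finset.mem_erase.mp he).1
        have he2 : ¬ (e.1 = i ∧ e.2 = j) := fun h => he' (Prod.ext h.1 h.2)
        simp [tS, hS', hy', hz', Finset.mem_insert, he', he2]
      rw [e2, e3] at this
      linarith

theorem stmt_1 {n : ℕ} (A B : Matrix (Fin n) (Fin n) ℝ)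
    (hA : ∀ i j, 0 ≤ A i j)
    (hB : ∀ i j, 0 ≤ B i j)
    (hrow : ∀ i, ∑ j, B i j = 1)
    (hcol : ∀ j, ∑ i, B i j = 1)
    (hsupp : ∀ i j, B i j ≠ 0 → A i j ≠ 0) :
    perm A ≥ (∏ i, ∏ j, (1 - B i j) ^ (1 - B i j)) *
      Real.exp (-(∑ i, ∑ j, if B i j = 0 then 0 else B i j * Real.log (B i j / A i j))) := by
  have h := main_ind A B hA hB hrow hcol Finset.univ (fun _ _ => 1) (fun _ _ => 1)
    (fun _ _ => one_pos) (fun _ _ => one_pos)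
  have e1 : wS A Finset.univ = A := by ext i j; simp [wS]
  have e2 : rS Finset.univ (fun _ _ : Fin n => (1 : ℝ)) = fun _ => 0 := by ext i; simp [rS]
  have e3 : cS Finset.univ (fun _ _ : Fin n => (1 : ℝ)) = fun _ => 0 := by ext i; simp [cS]
  have e6 : PM A (fun _ => 0) (fun _ => 0) Finset.univ.toList Finset.univ = perm A := PM_univ A
  rw [e1, e2, e3, e6] at h
  refine ge_iff_le.mpr (le_trans (le_of_eq ?_) h)
  rw [Fintype.prod_prod_type]
  simp only [tS, Finset.mem_univ, if_true, Finset.prod_mul_distrib]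
  rw [mul_comm]
  congr 1
  rw [← Finset.sum_neg_distrib, Real.exp_sum]
  refine Finset.prod_congr rfl fun i _ => ?_
  rw [← Finset.sum_neg_distrib, Real.exp_sum]
  refine Finset.prod_congr rfl fun j _ => ?_
  split_ifs with h0
  · simp [h0]
  · have hb : 0 < B i j := lt_of_le_of_ne (hB i j) (Ne.symm h0)
    have ha : 0 < A i j := lt_of_le_of_ne (hA i j) (Ne.symm (hsupp i j h0))
    rw [Real.rpow_def_of_pos (div_pos ha hb), Real.log_div hb.ne' ha.ne',
      Real.log_div ha.ne' hb.ne']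
    congr 1; ring
end
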